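/- arXiv:2502.18715 — 3 statements merged into one kernel-verified Lean document; each statement's English description precedes it below -/
import Mathlib

section
/- Let n ≥ 1 and p_1, …, p_n ∈ [0,1], and set μ = Σ_{i=1}^{n} p_i and p̄ = μ/n. Then the average error of the Poisson approximation to the Poisson-binomial distribution satisfies (1/n) Σ_{d=0}^{n} | PB(d) − μ^d e^{−μ}/d! | ≤ (2/n) Σ_{i=1}^{n} p_i² = 2 Σ_{i=1}^{n} (p_i − p̄)²/n + 2 p̄². -/
open Finset

/-- The Poisson-binomial probability mass function with success probabilities
`p 1, …, p n`, evaluated at `d`: the enumeration formula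
`PB(d) = Σ_{A ⊆ {1,…,n}, |A| = d} (∏_{i ∈ A} p i)(∏_{i ∉ A} (1 − p i))`. -/
noncomputable def PBpmf (n : ℕ) (p : Fin n → ℝ) (d : ℕ) : ℝ :=
  ∑ A ∈ Finset.powersetCard d (Finset.univ : Finset (Fin n)),
    (∏ i ∈ A, p i) * ∏ i ∈ Aᶜ, (1 - p i)

/-!
Encode a distribution on `ℕ` by its generating function, and measure power series by the `ℓ¹` norm
of their coefficients, which is submultiplicative and equals `1` on probability distributions. The
Poisson-binomial law is the product of the Bernoulli series, and the Poisson law of mean `∑ p i` is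
the product of the Poisson series of means `p i`. Replacing the factors one at a time shows that
the distance between the products is at most the sum of the distances between the factors, and
a Bernoulli and a Poisson law of the same mean `q` are at distance `2 q (1 - e^{-q}) ≤ 2 q²`.
-/

section RingSeminorm

variable {ι R : Type*} [CommRing R] {ν : RingSeminorm R} {s : Finset ι} {a b : ι → R}

lemma ringSeminorm_prod_le_one (h1 : ν 1 ≤ 1) (ha : ∀ i ∈ s, ν (a i) ≤ 1) :
    ν (∏ i ∈ s, a i) ≤ 1 :=
  prod_induction a (ν · ≤ 1)
    (fun x y hx hy ↦ (map_mul_le_mul ν x y).trans (mul_le_one₀ hx (apply_nonneg ν y) hy)) h1 ha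

lemma ringSeminorm_prod_sub_prod_le (h1 : ν 1 ≤ 1) (ha : ∀ i ∈ s, ν (a i) ≤ 1)
    (hb : ∀ i ∈ s, ν (b i) ≤ 1) :
    ν (∏ i ∈ s, a i - ∏ i ∈ s, b i) ≤ ∑ i ∈ s, ν (a i - b i) := by
  classical
  induction s using Finset.induction_on with
  | empty => simp
  | insert j s hj ih =>
    rw [forall_mem_insert] at ha hb
    rw [prod_insert hj, prod_insert hj, sum_insert hj]
    calc ν (a j * ∏ i ∈ s, a i - b j * ∏ i ∈ s, b i)
        = ν ((a j - b j) * ∏ i ∈ s, a i + b j * (∏ i ∈ s, a i - ∏ i ∈ s, b i)) := by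
          congr 1; ring
      _ ≤ ν (a j - b j) * ν (∏ i ∈ s, a i) + ν (b j) * ν (∏ i ∈ s, a i - ∏ i ∈ s, b i) :=
          (map_add_le_add ν _ _).trans (add_le_add (map_mul_le_mul ν _ _) (map_mul_le_mul ν _ _))
      _ ≤ ν (a j - b j) + ν (∏ i ∈ s, a i - ∏ i ∈ s, b i) :=
          add_le_add
            (mul_le_of_le_one_right (apply_nonneg ν _) (ringSeminorm_prod_le_one h1 ha.2))
            (mul_le_of_le_one_left (apply_nonneg ν _) hb.1)
      _ ≤ ν (a j - b j) + ∑ i ∈ s, ν (a i - b i) := by gcongr; exact ih ha.2 hb.2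

end RingSeminorm

section PowerSeries

open PowerSeries

section TruncNorm

variable {R : Type*} [SeminormedRing R]

lemma sum_range_norm_coeff_mul_le (N : ℕ) (f g : R⟦X⟧) :
    ∑ d ∈ range N, ‖coeff d (f * g)‖
      ≤ (∑ d ∈ range N, ‖coeff d f‖) * ∑ d ∈ range N, ‖coeff d g‖ :=
  calc ∑ d ∈ range N, ‖coeff d (f * g)‖
      ≤ ∑ d ∈ range N, ∑ i ∈ range (d + 1), ‖coeff i f‖ * ‖coeff (d - i) g‖ := by
        refine sum_le_sum fun d _ ↦ ?_
        rw [coeff_mul, Nat.sum_antidiagonal_eq_sum_range_succ fun i j ↦ coeff i f * coeff j g]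
        exact norm_sum_le_of_le _ fun i _ ↦ norm_mul_le _ _
    _ = ∑ i ∈ range N, ∑ j ∈ range (N - i), ‖coeff i f‖ * ‖coeff j g‖ :=
        sum_range_diag_flip N fun i j ↦ ‖coeff i f‖ * ‖coeff j g‖
    _ ≤ ∑ i ∈ range N, ∑ j ∈ range N, ‖coeff i f‖ * ‖coeff j g‖ := by
        gcongr with i
        exact Nat.sub_le N i
    _ = (∑ d ∈ range N, ‖coeff d f‖) * ∑ d ∈ range N, ‖coeff d g‖ := (sum_mul_sum ..).symm

/-- The `ℓ¹` seminorm `∑_{d < N} ‖f_d‖` of the coefficients of a power series. The truncation makes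
it finite on every power series, and bounds uniform in `N` are bounds on the full `ℓ¹` norm. -/
noncomputable def truncNorm (R : Type*) [SeminormedRing R] (N : ℕ) : RingSeminorm R⟦X⟧ where
  toFun f := ∑ d ∈ range N, ‖coeff d f‖
  map_zero' := by simp
  add_le' f g := by
    rw [← sum_add_distrib]
    exact sum_le_sum fun d _ ↦ by simpa only [map_add] using norm_add_le _ _
  neg' f := by simp only [map_neg, norm_neg]
  mul_le' := sum_range_norm_coeff_mul_le N

lemma truncNorm_apply (N : ℕ) (f : R⟦X⟧) : truncNorm R N f = ∑ d ∈ range N, ‖coeff d f‖ := rfl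

lemma truncNorm_le_of_hasSum {f : R⟦X⟧} {c : ℝ} (h : HasSum (fun d ↦ ‖coeff d f‖) c) (N : ℕ) :
    truncNorm R N f ≤ c :=
  sum_le_hasSum (range N) (fun _ _ ↦ norm_nonneg _) h

lemma truncNorm_one_le [NormOneClass R] (N : ℕ) : truncNorm R N (1 : R⟦X⟧) ≤ 1 := by
  refine truncNorm_le_of_hasSum ?_ N
  simpa only [coeff_one, apply_ite norm, norm_one, norm_zero] using hasSum_ite_eq 0 (1 : ℝ)

lemma truncNorm_le_of_nonneg_of_hasSum {f : ℝ⟦X⟧} {c : ℝ} (h0 : ∀ d, 0 ≤ coeff d f)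
    (h : HasSum (fun d ↦ coeff d f) c) (N : ℕ) : truncNorm ℝ N f ≤ c :=
  truncNorm_le_of_hasSum (by simpa only [Real.norm_of_nonneg, h0] using h) N

end TruncNorm

section Bernoulli

lemma coeff_prod_C_mul_X_add_C {ι R : Type*} [DecidableEq ι] [CommSemiring R] (s : Finset ι)
    (a b : ι → R) (d : ℕ) :
    coeff d (∏ i ∈ s, (C (a i) * X + C (b i)))
      = ∑ A ∈ powersetCard d s, (∏ i ∈ A, a i) * ∏ i ∈ s \ A, b i := by
  have coeff_term (A : Finset ι) :
      coeff d ((∏ i ∈ A, C (a i) * X) * ∏ i ∈ s \ A, C (b i))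
        = if #A = d then (∏ i ∈ A, a i) * ∏ i ∈ s \ A, b i else 0 := by
    rw [prod_mul_distrib, prod_const, ← map_prod, ← map_prod, mul_right_comm, ← map_mul,
      coeff_C_mul, coeff_X_pow, mul_ite, mul_one, mul_zero]
    simp only [eq_comm]
  rw [prod_add, map_sum, powersetCard_eq_filter, sum_filter]
  exact sum_congr rfl fun A _ ↦ coeff_term A

/-- The generating function `q X + (1 - q)` of the Bernoulli distribution with parameter `q`. -/
noncomputable def bernoulliSeries (q : ℝ) : ℝ⟦X⟧ := C q * X + C (1 - q)

lemma coeff_prod_bernoulliSeries {n : ℕ} (p : Fin n → ℝ) (d : ℕ) :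
    coeff d (∏ i, bernoulliSeries (p i)) = PBpmf n p d := by
  simp only [bernoulliSeries, coeff_prod_C_mul_X_add_C, PBpmf, compl_eq_univ_sdiff]

lemma coeff_zero_bernoulliSeries (q : ℝ) : coeff 0 (bernoulliSeries q) = 1 - q := by
  simp [bernoulliSeries]

lemma coeff_one_bernoulliSeries (q : ℝ) : coeff 1 (bernoulliSeries q) = q := by
  simp [bernoulliSeries]

lemma coeff_bernoulliSeries_of_two_le (q : ℝ) {d : ℕ} (hd : 2 ≤ d) :
    coeff d (bernoulliSeries q) = 0 := by
  obtain ⟨k, rfl⟩ := Nat.exists_eq_add_of_le' hd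
  simp [bernoulliSeries]

lemma coeff_bernoulliSeries_nonneg {q : ℝ} (hq0 : 0 ≤ q) (hq1 : q ≤ 1) :
    ∀ d, 0 ≤ coeff d (bernoulliSeries q)
  | 0 => (sub_nonneg.2 hq1).trans_eq (coeff_zero_bernoulliSeries q).symm
  | 1 => hq0.trans_eq (coeff_one_bernoulliSeries q).symm
  | _ + 2 => (coeff_bernoulliSeries_of_two_le q (Nat.le_add_left 2 _)).ge

lemma hasSum_coeff_bernoulliSeries (q : ℝ) : HasSum (fun d ↦ coeff d (bernoulliSeries q)) 1 := by
  have h : ∑ d ∈ range 2, coeff d (bernoulliSeries q) = 1 := by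
    rw [sum_range_succ, sum_range_one, coeff_zero_bernoulliSeries, coeff_one_bernoulliSeries,
      sub_add_cancel]
  rw [← h]
  refine hasSum_sum_of_ne_finset_zero fun d hd ↦ coeff_bernoulliSeries_of_two_le q ?_
  simpa only [mem_range, not_lt] using hd

end Bernoulli

section Poisson

/-- The generating function `e^{-r} e^{r X}` of the Poisson distribution with mean `r`. -/
noncomputable def poissonSeries (r : ℝ) : ℝ⟦X⟧ :=
  C (Real.exp (-r)) * rescale r (PowerSeries.exp ℝ)

lemma coeff_poissonSeries (r : ℝ) (d : ℕ) :
    coeff d (poissonSeries r) = r ^ d * Real.exp (-r) / (Nat.factorial d : ℝ) := by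
  simp only [poissonSeries, coeff_C_mul, coeff_rescale, coeff_exp, one_div, map_inv₀, map_natCast]
  ring

lemma poissonSeries_zero : poissonSeries 0 = 1 := by
  simp [poissonSeries, rescale_zero]

lemma poissonSeries_add (r t : ℝ) :
    poissonSeries (r + t) = poissonSeries r * poissonSeries t := by
  simp only [poissonSeries, ← exp_mul_exp_eq_exp_add, neg_add, Real.exp_add, map_mul]
  ring

lemma poissonSeries_sum {ι : Type*} (s : Finset ι) (r : ι → ℝ) :
    poissonSeries (∑ i ∈ s, r i) = ∏ i ∈ s, poissonSeries (r i) := by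
  classical
  induction s using Finset.induction_on with
  | empty => exact poissonSeries_zero
  | insert i s hi ih => rw [prod_insert hi, sum_insert hi, poissonSeries_add, ih]

lemma coeff_poissonSeries_nonneg {r : ℝ} (hr : 0 ≤ r) (d : ℕ) : 0 ≤ coeff d (poissonSeries r) := by
  rw [coeff_poissonSeries]
  positivity

lemma hasSum_coeff_poissonSeries {r : ℝ} (hr : 0 ≤ r) :
    HasSum (fun d ↦ coeff d (poissonSeries r)) 1 := by
  lift r to NNReal using hr
  simpa only [coeff_poissonSeries, mul_comm] using ProbabilityTheory.hasSum_one_poissonMeasure r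

end Poisson

lemma norm_coeff_bernoulliSeries_sub_poissonSeries {q : ℝ} (hq : 0 ≤ q) (d : ℕ) :
    ‖coeff d (bernoulliSeries q - poissonSeries q)‖
      = coeff d (poissonSeries q) - coeff d (bernoulliSeries q)
        + if d = 1 then 2 * q * (1 - Real.exp (-q)) else 0 := by
  rw [map_sub, Real.norm_eq_abs]
  match d with
  | 0 =>
    have h : 1 - q ≤ Real.exp (-q) := Real.one_sub_le_exp_neg q
    rw [coeff_zero_bernoulliSeries, coeff_poissonSeries, if_neg zero_ne_one, abs_of_nonpos] <;>
      simp [h]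
  | 1 =>
    have h : 0 ≤ q - q * Real.exp (-q) := by
      rw [sub_nonneg]
      exact mul_le_of_le_one_right hq (Real.exp_le_one_iff.2 (neg_nonpos.2 hq))
    rw [coeff_one_bernoulliSeries, coeff_poissonSeries, if_pos rfl, pow_one, Nat.factorial_one,
      Nat.cast_one, div_one, abs_of_nonneg h]
    ring
  | k + 2 =>
    rw [coeff_bernoulliSeries_of_two_le q (Nat.le_add_left 2 k), if_neg (by lia), zero_sub,
      abs_neg, abs_of_nonneg (coeff_poissonSeries_nonneg hq _), sub_zero, add_zero]

-- The Bernoulli law exceeds the Poisson law only at `d = 1`. As both have total mass `1`, their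
-- `ℓ¹` distance is twice that excess.
lemma hasSum_norm_coeff_bernoulliSeries_sub_poissonSeries {q : ℝ} (hq : 0 ≤ q) :
    HasSum (fun d ↦ ‖coeff d (bernoulliSeries q - poissonSeries q)‖)
      (2 * q * (1 - Real.exp (-q))) := by
  simpa only [norm_coeff_bernoulliSeries_sub_poissonSeries hq, sub_self, zero_add] using
    ((hasSum_coeff_poissonSeries hq).sub (hasSum_coeff_bernoulliSeries q)).add
      (hasSum_ite_eq 1 (2 * q * (1 - Real.exp (-q))))

lemma truncNorm_bernoulliSeries_sub_poissonSeries_le (N : ℕ) {q : ℝ} (hq : 0 ≤ q) :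
    truncNorm ℝ N (bernoulliSeries q - poissonSeries q) ≤ 2 * q ^ 2 :=
  calc truncNorm ℝ N (bernoulliSeries q - poissonSeries q)
      ≤ 2 * q * (1 - Real.exp (-q)) :=
        truncNorm_le_of_hasSum (hasSum_norm_coeff_bernoulliSeries_sub_poissonSeries hq) N
    _ ≤ 2 * q * q := by
        gcongr
        exact sub_le_comm.1 (Real.one_sub_le_exp_neg q)
    _ = 2 * q ^ 2 := by ring

theorem sum_range_abs_PBpmf_sub_poisson_le (N : ℕ) {n : ℕ} {p : Fin n → ℝ}
    (hp0 : ∀ i, 0 ≤ p i) (hp1 : ∀ i, p i ≤ 1) :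
    ∑ d ∈ range N,
        |PBpmf n p d - (∑ i, p i) ^ d * Real.exp (-(∑ i, p i)) / (Nat.factorial d : ℝ)|
      ≤ 2 * ∑ i, p i ^ 2 :=
  calc ∑ d ∈ range N,
        |PBpmf n p d - (∑ i, p i) ^ d * Real.exp (-(∑ i, p i)) / (Nat.factorial d : ℝ)|
      = truncNorm ℝ N (∏ i, bernoulliSeries (p i) - ∏ i, poissonSeries (p i)) := by
        simp only [truncNorm_apply, map_sub, ← poissonSeries_sum, coeff_prod_bernoulliSeries,
          coeff_poissonSeries, Real.norm_eq_abs]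
    _ ≤ ∑ i, truncNorm ℝ N (bernoulliSeries (p i) - poissonSeries (p i)) :=
        ringSeminorm_prod_sub_prod_le (truncNorm_one_le N)
          (fun i _ ↦ truncNorm_le_of_nonneg_of_hasSum
            (coeff_bernoulliSeries_nonneg (hp0 i) (hp1 i)) (hasSum_coeff_bernoulliSeries _) N)
          (fun i _ ↦ truncNorm_le_of_nonneg_of_hasSum
            (coeff_poissonSeries_nonneg (hp0 i)) (hasSum_coeff_poissonSeries (hp0 i)) N)
    _ ≤ ∑ i, 2 * p i ^ 2 :=
        sum_le_sum fun i _ ↦ truncNorm_bernoulliSeries_sub_poissonSeries_le N (hp0 i)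
    _ = 2 * ∑ i, p i ^ 2 := (mul_sum ..).symm

end PowerSeries

lemma sum_sq_eq_sum_sub_sq_add_of_card_mul_eq_sum {ι R : Type*} [CommRing R] {s : Finset ι}
    {x : ι → R} {c : R} (hc : #s * c = ∑ i ∈ s, x i) :
    ∑ i ∈ s, x i ^ 2 = ∑ i ∈ s, (x i - c) ^ 2 + #s * c ^ 2 := by
  simp only [sub_sq, sum_add_distrib, sum_sub_distrib, ← sum_mul, ← mul_sum, ← hc, sum_const,
    nsmul_eq_mul]
  ring

/-- **Le Cam's bound and the bias–variance decomposition.** With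
`μ = Σ p i` and `p̄ = μ/n`, the average error of the Poisson approximation
to the Poisson-binomial distribution satisfies
`(1/n) Σ_{d=0}^{n} |PB(d) − μ^d e^{−μ}/d!| ≤ (2/n) Σ p i² = 2 Σ (p i − p̄)²/n + 2 p̄²`. -/
theorem lecam_poisson_approximation (n : ℕ) (hn : 1 ≤ n) (p : Fin n → ℝ)
    (hp0 : ∀ i, 0 ≤ p i) (hp1 : ∀ i, p i ≤ 1) :
    ((1 : ℝ) / n) *
        ∑ d ∈ Finset.range (n + 1),
          |PBpmf n p d - (∑ i, p i) ^ d * Real.exp (-(∑ i, p i)) / (Nat.factorial d : ℝ)|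
      ≤ (2 / (n : ℝ)) * ∑ i, (p i) ^ 2
    ∧ (2 / (n : ℝ)) * ∑ i, (p i) ^ 2
      = 2 * (∑ i, (p i - (∑ j, p j) / n) ^ 2) / n + 2 * ((∑ j, p j) / n) ^ 2 := by
  have hn0 : (n : ℝ) ≠ 0 := Nat.cast_ne_zero.2 (Nat.one_le_iff_ne_zero.1 hn)
  constructor
  · rw [div_mul_eq_mul_div, div_mul_eq_mul_div, one_mul]
    gcongr
    exact sum_range_abs_PBpmf_sub_poisson_le (n + 1) hp0 hp1
  · have hmean : (#(univ : Finset (Fin n)) : ℝ) * ((∑ j, p j) / n) = ∑ j, p j := by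
      rw [card_fin, mul_div_cancel₀ _ hn0]
    rw [sum_sq_eq_sum_sub_sq_add_of_card_mul_eq_sum hmean, card_fin]
    field_simp
end

section
/- Let R be a nonempty finite set, r : R → (0,∞), and D ⊆ R a nonempty subset with |D| = d. For λ > 0 define p_i(λ) = 1 − exp(−r_i λ) and μ(λ) = Σ_{i ∈ R} p_i(λ). Then as λ → 0⁺, [ ∏_{i ∈ D} p_i(λ) · ∏_{i ∈ R∖D} (1 − p_i(λ)) ] / [ μ(λ)^d e^{−μ(λ)}/d! ] → d! · (∏_{i ∈ D} r_i) / (Σ_{i ∈ R} r_i)^d; that is, the accurate partial likelihood term with denominator replaced by its Poisson approximation converges to the Breslow-corrected partial likelihood term (up to the factor d!). -/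
open Finset Filter Topology

/-- The event probability `p_i(λ) = 1 − exp(−r_i λ)` of subject `i` at an event
time, given risk score `r i` and baseline hazard increment `λ`. -/
noncomputable def pHaz {ι : Type*} (r : ι → ℝ) (l : ℝ) (i : ι) : ℝ :=
  1 - Real.exp (-(r i * l))

/-- The Poisson-approximation mean `μ(λ) = Σ_{i ∈ R} p_i(λ)`. -/
noncomputable def muHaz {ι : Type*} [Fintype ι] (r : ι → ℝ) (l : ℝ) : ℝ :=
  ∑ i, pHaz r l i

/-!
Each `p i` vanishes to first order with slope `r i`. The ratio splits as
`d! * (∏_D p i / μ ^ d) * (∏_{R \ D} (1 - p i) / exp (-μ))`. The middle factor is homogeneous of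
degree zero in `p`, so `p` may be replaced by the rescaling `λ⁻¹ * p`, which tends to `r`; the last
factor tends to `1` because `p` and `μ` tend to `0`.
-/

section Limits

variable {ι α : Type*} {F : Filter α}

theorem tendsto_prod_div_sum_pow {𝕜 : Type*} [Semifield 𝕜] [TopologicalSpace 𝕜]
    [IsTopologicalSemiring 𝕜] [ContinuousInv₀ 𝕜] [T1Space 𝕜]
    {f : ι → α → 𝕜} {a : ι → 𝕜} {c : α → 𝕜} {R : Finset ι}
    (hf : ∀ i, Tendsto (fun x => c x * f i x) F (𝓝 (a i)))
    (ha : ∑ i ∈ R, a i ≠ 0) (D : Finset ι) :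
    Tendsto (fun x => (∏ i ∈ D, f i x) / (∑ i ∈ R, f i x) ^ #D) F
      (𝓝 ((∏ i ∈ D, a i) / (∑ i ∈ R, a i) ^ #D)) := by
  have hsum : Tendsto (fun x => ∑ i ∈ R, c x * f i x) F (𝓝 (∑ i ∈ R, a i)) :=
    tendsto_finsetSum R fun i _ => hf i
  have hprod : Tendsto (fun x => ∏ i ∈ D, c x * f i x) F (𝓝 (∏ i ∈ D, a i)) :=
    tendsto_finsetProd D fun i _ => hf i
  refine (hprod.div (hsum.pow #D) (pow_ne_zero _ ha)).congr' ?_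
  filter_upwards [hsum.eventually_ne ha] with x hx
  rw [← mul_sum] at hx
  have hc : c x ^ #D ≠ 0 := pow_ne_zero _ (left_ne_zero_of_mul hx)
  calc (∏ i ∈ D, c x * f i x) / (∑ i ∈ R, c x * f i x) ^ #D
      = (c x ^ #D * ∏ i ∈ D, f i x) / (c x ^ #D * (∑ i ∈ R, f i x) ^ #D) := by
        rw [prod_mul_distrib, prod_const, ← mul_sum, mul_pow]
    _ = (∏ i ∈ D, f i x) / (∑ i ∈ R, f i x) ^ #D := mul_div_mul_left _ _ hc

theorem tendsto_prod_one_sub_div_exp_neg_sum {f : ι → α → ℝ}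
    (hf : ∀ i, Tendsto (f i) F (𝓝 0)) (S R : Finset ι) :
    Tendsto (fun x => (∏ i ∈ S, (1 - f i x)) / Real.exp (-∑ i ∈ R, f i x)) F (𝓝 1) := by
  have hprod : Tendsto (fun x => ∏ i ∈ S, (1 - f i x)) F (𝓝 1) := by
    simpa using tendsto_finsetProd S fun i _ => (hf i).const_sub 1
  have hexp : Tendsto (fun x => Real.exp (-∑ i ∈ R, f i x)) F (𝓝 1) := by
    simpa using (tendsto_finsetSum R fun i _ => hf i).neg.rexp
  simpa [Pi.div_def] using hprod.div hexp one_ne_zero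

theorem apl_poisson_approx_breslow_general [Fintype ι] [DecidableEq ι]
    {p : ι → α → ℝ} {r : ι → ℝ} {c : α → ℝ} (hp : ∀ i, Tendsto (p i) F (𝓝 0))
    (hcp : ∀ i, Tendsto (fun x => c x * p i x) F (𝓝 (r i)))
    (hr : ∑ i, r i ≠ 0) (D : Finset ι) :
    Tendsto
      (fun x => ((∏ i ∈ D, p i x) * ∏ i ∈ univ \ D, (1 - p i x))
        / ((∑ i, p i x) ^ #D * Real.exp (-∑ i, p i x) / (Nat.factorial #D : ℝ)))
      F (𝓝 ((Nat.factorial #D : ℝ) * (∏ i ∈ D, r i) / (∑ i, r i) ^ #D)) := by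
  have hevents := tendsto_prod_div_sum_pow hcp hr D
  have hsurvivors := tendsto_prod_one_sub_div_exp_neg_sum hp (univ \ D) univ
  convert (hevents.mul hsurvivors).const_mul (Nat.factorial #D : ℝ) using 2
  · rw [div_div_eq_mul_div, mul_div_right_comm, mul_div_mul_comm, mul_comm]
  · rw [mul_one, mul_div_assoc]

end Limits

section Hazard

variable {ι : Type*} (r : ι → ℝ) (i : ι)

@[simp]
theorem pHaz_zero : pHaz r 0 i = 0 := by
  simp [pHaz]

theorem hasDerivAt_pHaz_zero : HasDerivAt (fun l => pHaz r l i) (r i) 0 := by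
  simpa [pHaz] using ((hasDerivAt_id (0 : ℝ)).const_mul (r i)).neg.exp.const_sub 1

theorem tendsto_pHaz_nhds_zero : Tendsto (fun l => pHaz r l i) (𝓝 0) (𝓝 0) := by
  simpa using (hasDerivAt_pHaz_zero r i).continuousAt.tendsto

theorem tendsto_inv_mul_pHaz_nhdsNE_zero :
    Tendsto (fun l => l⁻¹ * pHaz r l i) (𝓝[≠] 0) (𝓝 (r i)) := by
  simpa using (hasDerivAt_pHaz_zero r i).tendsto_slope_zero

end Hazard

/-- **The Breslow correction is the Poisson approximation of the accurate
partial likelihood term (with ties).** As `λ → 0⁺`, the accurate partial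
likelihood term with denominator replaced by its Poisson approximation
converges to `d! (∏_{i ∈ D} r i)/(Σ_{i ∈ R} r i)^d`. -/
theorem apl_poisson_approx_breslow {ι : Type*} [Fintype ι] [Nonempty ι]
    [DecidableEq ι] (r : ι → ℝ) (hr : ∀ i, 0 < r i)
    (D : Finset ι) (hD : D.Nonempty) (d : ℕ) (hd : D.card = d) :
    Filter.Tendsto
      (fun l : ℝ =>
        ((∏ i ∈ D, pHaz r l i) * ∏ i ∈ Finset.univ \ D, (1 - pHaz r l i))
          / (muHaz r l ^ d * Real.exp (-muHaz r l) / (Nat.factorial d : ℝ)))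
      (𝓝[>] (0 : ℝ))
      (𝓝 ((Nat.factorial d : ℝ) * (∏ i ∈ D, r i) / (∑ i, r i) ^ d)) := by
  subst hd
  exact apl_poisson_approx_breslow_general
    (fun i => (tendsto_pHaz_nhds_zero r i).mono_left nhdsWithin_le_nhds)
    (fun i => (tendsto_inv_mul_pHaz_nhdsNE_zero r i).mono_left (nhdsGT_le_nhdsNE 0))
    (sum_pos (fun i _ => hr i) univ_nonempty).ne' D
end

section
/- Let R be a nonempty finite set, r : R → (0,∞), and D ⊆ R a nonempty subset with |D| = d. For λ > 0 define p_i(λ) = 1 − exp(−r_i λ). Then as λ → 0⁺, the accurate partial likelihood term computed with the enumeration form of the Poisson-binomial denominator converges to the Cox-corrected partial likelihood term: [ ∏_{i ∈ D} p_i(λ) · ∏_{i ∈ R∖D} (1 − p_i(λ)) ] / [ Σ_{A ⊆ R, |A| = d} ( ∏_{i ∈ A} p_i(λ) · ∏_{i ∈ R∖A} (1 − p_i(λ)) ) ] → ( ∏_{i ∈ D} r_i ) / ( Σ_{A ⊆ R, |A| = d} ∏_{i ∈ A} r_i ). -/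
open Finset Filter Topology

/-!
The probability that exactly the `d` subjects in `A` have an event is of order `λ ^ d`: the `d`
event factors are asymptotic to `r i * λ`, and the survival factors tend to `1`. The common factor
`λ ^ d` of numerator and denominator cancels.
-/

section ExactEventProb

variable {ι : Type*} [Fintype ι] [DecidableEq ι]

/-- The probability that `A` is exactly the set of subjects with an event, when subject `i` has one
independently with probability `p i`: a single summand of the Poisson-binomial mass function at
`#A`. As a polynomial in the `p i`, it makes sense over any commutative ring. -/
def exactEventProb {K : Type*} [CommRing K] (p : ι → K) (A : Finset ι) : K :=
  (∏ i ∈ A, p i) * ∏ i ∈ univ \ A, (1 - p i)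

lemma exactEventProb_div_pow_card {K : Type*} [Field K] (p : ι → K) (s : K) (A : Finset ι) :
    exactEventProb p A / s ^ #A = (∏ i ∈ A, p i / s) * ∏ i ∈ univ \ A, (1 - p i) := by
  rw [exactEventProb, prod_div_distrib, prod_const, div_mul_eq_mul_div]

lemma tendsto_zero_of_tendsto_div {α K : Type*} [Field K] [TopologicalSpace K] [ContinuousMul K]
    {l : Filter α} {f s : α → K} {c : K} (hs : Tendsto s l (𝓝[≠] 0))
    (hf : Tendsto (fun a => f a / s a) l (𝓝 c)) : Tendsto f l (𝓝 0) := by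
  obtain ⟨hs_zero, hs_ne⟩ := tendsto_nhdsWithin_iff.1 hs
  have hmul : Tendsto (fun a => f a / s a * s a) l (𝓝 0) := by
    simpa only [mul_zero] using hf.mul hs_zero
  exact hmul.congr' (hs_ne.mono fun _ ha => div_mul_cancel₀ _ ha)

lemma tendsto_exactEventProb_div_pow_card {α K : Type*} [Field K] [TopologicalSpace K]
    [IsTopologicalRing K] {l : Filter α} {p : α → ι → K} {s : α → K} {r : ι → K}
    (hs : Tendsto s l (𝓝[≠] 0)) (hp : ∀ i, Tendsto (fun a => p a i / s a) l (𝓝 (r i)))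
    (A : Finset ι) :
    Tendsto (fun a => exactEventProb (p a) A / s a ^ #A) l (𝓝 (∏ i ∈ A, r i)) := by
  have hevent : Tendsto (fun a => ∏ i ∈ A, p a i / s a) l (𝓝 (∏ i ∈ A, r i)) :=
    tendsto_finsetProd A fun i _ => hp i
  have hsurvival : Tendsto (fun a => ∏ i ∈ univ \ A, (1 - p a i)) l (𝓝 1) := by
    simpa only [sub_zero, prod_const_one] using tendsto_finsetProd (univ \ A) fun i _ =>
      (tendsto_zero_of_tendsto_div hs (hp i)).const_sub 1
  simpa only [exactEventProb_div_pow_card, mul_one] using hevent.mul hsurvival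

theorem apl_enumeration_cox_correction_general {α K : Type*} [Field K] [TopologicalSpace K]
    [IsTopologicalDivisionRing K] {l : Filter α} {p : α → ι → K} {s : α → K} {r : ι → K}
    (hs : Tendsto s l (𝓝[≠] 0)) (hp : ∀ i, Tendsto (fun a => p a i / s a) l (𝓝 (r i)))
    (D : Finset ι) (hr : ∑ A ∈ powersetCard #D univ, ∏ i ∈ A, r i ≠ 0) :
    Tendsto
      (fun a => exactEventProb (p a) D / ∑ A ∈ powersetCard #D univ, exactEventProb (p a) A)
      l (𝓝 ((∏ i ∈ D, r i) / ∑ A ∈ powersetCard #D univ, ∏ i ∈ A, r i)) := by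
  have hsum : Tendsto
      (fun a => (∑ A ∈ powersetCard #D univ, exactEventProb (p a) A) / s a ^ #D)
      l (𝓝 (∑ A ∈ powersetCard #D univ, ∏ i ∈ A, r i)) := by
    simp only [sum_div]
    refine tendsto_finsetSum _ fun A hA => ?_
    rw [← (mem_powersetCard.1 hA).2]
    exact tendsto_exactEventProb_div_pow_card hs hp A
  have hs_ne : ∀ᶠ a in l, s a ≠ 0 := (tendsto_nhdsWithin_iff.1 hs).2
  refine ((tendsto_exactEventProb_div_pow_card hs hp D).div hsum hr).congr' ?_
  exact hs_ne.mono fun a ha => div_div_div_cancel_right₀ (pow_ne_zero _ ha) _ _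

end ExactEventProb

lemma sum_powersetCard_prod_pos {ι K : Type*} [CommSemiring K] [PartialOrder K]
    [IsStrictOrderedRing K] {R : Finset ι} {d : ℕ} {f : ι → K} (hd : d ≤ #R)
    (hf : ∀ i ∈ R, 0 < f i) : 0 < ∑ A ∈ powersetCard d R, ∏ i ∈ A, f i :=
  sum_pos (fun _ hA => prod_pos fun i hi => hf i ((mem_powersetCard.1 hA).1 hi))
    (powersetCard_nonempty.2 hd)

lemma hasDerivAt_pHaz {ι : Type*} (r : ι → ℝ) (i : ι) (l : ℝ) :
    HasDerivAt (fun t => pHaz r t i) (r i * Real.exp (-(r i * l))) l := by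
  have hexponent : HasDerivAt (fun t => -(r i * t)) (-r i) l := by
    simpa only [mul_one] using ((hasDerivAt_id' l).const_mul (r i)).fun_neg
  exact (hexponent.exp.const_sub 1).congr_deriv (by ring)

lemma tendsto_pHaz_div_self {ι : Type*} (r : ι → ℝ) (i : ι) :
    Tendsto (fun l => pHaz r l i / l) (𝓝[≠] 0) (𝓝 (r i)) := by
  have hslope := (hasDerivAt_pHaz r i 0).tendsto_slope_zero
  simpa [pHaz, div_eq_inv_mul] using hslope

/-- **The Cox correction is the enumeration limit of the accurate partial
likelihood term.** As `λ → 0⁺`, the accurate partial likelihood term computed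
with the enumeration form of the Poisson-binomial denominator converges to
`(∏_{i ∈ D} r i)/(Σ_{A ⊆ R, |A| = d} ∏_{i ∈ A} r i)`. -/
theorem apl_enumeration_cox_correction {ι : Type*} [Fintype ι] [Nonempty ι]
    [DecidableEq ι] (r : ι → ℝ) (hr : ∀ i, 0 < r i)
    (D : Finset ι) (hD : D.Nonempty) (d : ℕ) (hd : D.card = d) :
    Filter.Tendsto
      (fun l : ℝ =>
        ((∏ i ∈ D, pHaz r l i) * ∏ i ∈ Finset.univ \ D, (1 - pHaz r l i))
          / ∑ A ∈ Finset.powersetCard d (Finset.univ : Finset ι),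
              (∏ i ∈ A, pHaz r l i) * ∏ i ∈ Finset.univ \ A, (1 - pHaz r l i))
      (𝓝[>] (0 : ℝ))
      (𝓝 ((∏ i ∈ D, r i)
        / ∑ A ∈ Finset.powersetCard d (Finset.univ : Finset ι), ∏ i ∈ A, r i)) := by
  subst hd
  exact apl_enumeration_cox_correction_general (tendsto_id'.2 (nhdsGT_le_nhdsNE 0))
    (fun i => (tendsto_pHaz_div_self r i).mono_left (nhdsGT_le_nhdsNE 0)) D
    (sum_powersetCard_prod_pos (card_le_univ D) fun i _ => hr i).ne'
end
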